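/- arXiv:0706.1750 — 2 statements merged into one kernel-verified Lean document; each statement's English description precedes it below -/
import Mathlib

section
/- Let U ⊆ ℂ be open and connected with 0 ∉ U, let m, m̃, θ0, θ1 ∈ ℂ be constants with θ∞ := m̃ − m, and let w1, w2, w3, w̃1, w̃2, w̃3 : U → ℂ be differentiable functions satisfying the system (P5sys): t·w1′ = w̃2·w̃3, t·w̃1′ = −w2·w3, t·w2′ = −w̃1·w̃3, t·w̃2′ = w1·w3, t·w3′ = −(t − (m − m̃))·w3 − t·w̃1·w̃2, t·w̃3′ = (t − (m − m̃))·w̃3 + t·w1·w2, together with the first-integral relations w1·w̃1 + w2·w̃2 = θ0 and w1·w2·w3 + w̃1·w̃2·w̃3 + w3·w̃3 + (θ∞/2)·(w2·w̃2 − w1·w̃1) = (θ1² − θ0² − θ∞²)/4 identically on U. Assume w1, w2, w̃2 are nonvanishing on U, and that w2·w̃2 − (θ0+θ1−θ∞)/2 and w̃3 + w1·w2 are nonvanishing on U. Define y := w2·w̃2·(w̃3 + w1·w2) / ((w2·w̃2 − (θ0+θ1−θ∞)/2)·w1·w2), z := w2·w̃2 − θ0, u := −w1/w̃2. Then (y,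 z, u) satisfy the system (C.40): t·y′ = t·y − 2z(y−1)² − ((θ0 − θ1 + θ∞)/2)·(y−1)² + (θ0+θ1)·(y−1); t·z′ = y·z·(z + (θ0−θ1+θ∞)/2) − (1/y)·(z+θ0)·(z + (θ0+θ1+θ∞)/2); t·u′/u = −2z − θ0 + y·(z + (θ0−θ1+θ∞)/2) + (1/y)·(z + (θ0+θ1+θ∞)/2). -/
/-- From solutions of (P5sys) with the first-integral normalizations, the functions
y, z, u defined in (P5-eqn) satisfy the system (C.40). -/
theorem stmt_2
    (U : Set ℂ) (hU : IsOpen U) (hUconn : IsPreconnected U) (hU0 : (0 : ℂ) ∉ U)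
    (m mt th0 th1 thI : ℂ) (hthI : thI = mt - m)
    (w1 w2 w3 wt1 wt2 wt3 : ℂ → ℂ)
    (hd1 : ∀ t ∈ U, DifferentiableAt ℂ w1 t)
    (hd2 : ∀ t ∈ U, DifferentiableAt ℂ w2 t)
    (hd3 : ∀ t ∈ U, DifferentiableAt ℂ w3 t)
    (hdt1 : ∀ t ∈ U, DifferentiableAt ℂ wt1 t)
    (hdt2 : ∀ t ∈ U, DifferentiableAt ℂ wt2 t)
    (hdt3 : ∀ t ∈ U, DifferentiableAt ℂ wt3 t)
    (he1 : ∀ t ∈ U, t * deriv w1 t = wt2 t * wt3 t)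
    (he2 : ∀ t ∈ U, t * deriv wt1 t = -(w2 t * w3 t))
    (he3 : ∀ t ∈ U, t * deriv w2 t = -(wt1 t * wt3 t))
    (he4 : ∀ t ∈ U, t * deriv wt2 t = w1 t * w3 t)
    (he5 : ∀ t ∈ U, t * deriv w3 t = -(t - (m - mt)) * w3 t - t * (wt1 t * wt2 t))
    (he6 : ∀ t ∈ U, t * deriv wt3 t = (t - (m - mt)) * wt3 t + t * (w1 t * w2 t))
    (hint1 : ∀ t ∈ U, w1 t * wt1 t + w2 t * wt2 t = th0)
    (hint2 : ∀ t ∈ U, w1 t * w2 t * w3 t + wt1 t * wt2 t * wt3 t + w3 t * wt3 t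
        + (thI / 2) * (w2 t * wt2 t - w1 t * wt1 t) = (th1 ^ 2 - th0 ^ 2 - thI ^ 2) / 4)
    (hn1 : ∀ t ∈ U, w1 t ≠ 0) (hn2 : ∀ t ∈ U, w2 t ≠ 0) (hn3 : ∀ t ∈ U, wt2 t ≠ 0)
    (hn4 : ∀ t ∈ U, w2 t * wt2 t - (th0 + th1 - thI) / 2 ≠ 0)
    (hn5 : ∀ t ∈ U, wt3 t + w1 t * w2 t ≠ 0)
    (y z u : ℂ → ℂ)
    (hy : y = fun t => w2 t * wt2 t * (wt3 t + w1 t * w2 t)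
      / ((w2 t * wt2 t - (th0 + th1 - thI) / 2) * (w1 t * w2 t)))
    (hz : z = fun t => w2 t * wt2 t - th0)
    (hu : u = fun t => -(w1 t / wt2 t)) :
    ∀ t ∈ U,
      DifferentiableAt ℂ y t ∧ DifferentiableAt ℂ z t ∧ DifferentiableAt ℂ u t ∧
      t * deriv y t = t * y t - 2 * z t * (y t - 1) ^ 2
        - ((th0 - th1 + thI) / 2) * (y t - 1) ^ 2 + (th0 + th1) * (y t - 1) ∧
      t * deriv z t = y t * z t * (z t + (th0 - th1 + thI) / 2)
        - (1 / y t) * (z t + th0) * (z t + (th0 + th1 + thI) / 2) ∧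
      t * deriv u t / u t = -(2 * z t) - th0 + y t * (z t + (th0 - th1 + thI) / 2)
        + (1 / y t) * (z t + (th0 + th1 + thI) / 2) := by
  intro t ht
  have ht0 : t ≠ 0 := fun h => hU0 (h ▸ ht)
  have h1 := (hd1 t ht).hasDerivAt
  have h2 := (hd2 t ht).hasDerivAt
  have ht2 := (hdt2 t ht).hasDerivAt
  have ht3 := (hdt3 t ht).hasDerivAt
  have hn1 := hn1 t ht
  have hn2 := hn2 t ht
  have hn3 := hn3 t ht
  have hn4 := hn4 t ht
  have hn5 := hn5 t ht
  have hz' := (h2.mul ht2).sub_const th0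
  have hu' := (h1.div ht2 hn3).neg
  have hy' := ((h2.mul ht2).mul (ht3.add (h1.mul h2))).div
    (((h2.mul ht2).sub_const ((th0 + th1 - thI) / 2)).mul (h1.mul h2))
    (mul_ne_zero hn4 (mul_ne_zero hn1 hn2))
  replace hz' := hz'.congr_of_eventuallyEq (.of_eq hz)
  replace hu' := hu'.congr_of_eventuallyEq (.of_eq hu)
  replace hy' := hy'.congr_of_eventuallyEq (.of_eq hy)
  refine ⟨hy'.differentiableAt, hz'.differentiableAt, hu'.differentiableAt, ?_⟩
  rw [hy'.deriv, hz'.deriv, hu'.deriv]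
  have hm : m - mt = -thI := by rw [hthI]; ring
  have e1 := eq_div_of_mul_eq ht0 ((mul_comm _ _).trans (he1 t ht))
  have e3 := eq_div_of_mul_eq ht0 ((mul_comm _ _).trans (he3 t ht))
  have e4 := eq_div_of_mul_eq ht0 ((mul_comm _ _).trans (he4 t ht))
  have e6 := eq_div_of_mul_eq ht0 ((mul_comm _ _).trans (he6 t ht))
  rw [hm] at e6
  have i1 := hint1 t ht
  have i2 := hint2 t ht
  simp only [Pi.mul_apply, Pi.add_apply]
  rw [e1, e3, e4, e6]
  subst hy hz hu
  dsimp only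
  clear hy' hz' hu' e1 e3 e4 e6 h1 h2 ht2 ht3
  generalize w1 t = a at *
  generalize w2 t = b at *
  generalize w3 t = c at *
  generalize wt1 t = a' at *
  generalize wt2 t = b' at *
  generalize wt3 t = v at *
  have ha' : a' = (th0 - b * b') / a := by
    rw [eq_div_iff hn1]; linear_combination i1
  have hc : c = ((th1 ^ 2 - th0 ^ 2 - thI ^ 2) / 4 - a' * b' * v
      - (thI / 2) * (b * b' - a * a')) / (v + a * b) := by
    rw [eq_div_iff hn5]; linear_combination i2
  rw [hc, ha']
  clear hc ha' i1 i2 hint1 hint2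
  generalize hD : b * b' - (th0 + th1 - thI) / 2 = D at *
  generalize hq : v + a * b = q at *
  obtain rfl : th1 = 2 * (b * b' - D) - th0 + thI := by linear_combination -2 * hD
  obtain rfl : v = q - a * b := by linear_combination hq
  refine ⟨?_, ?_, ?_⟩
  · field_simp
    ring
  · field_simp
    ring
  · field_simp
    ring
end

section
/- Let U ⊆ ℂ be open with 0 ∉ U, let θ0, θ1, θ∞ ∈ ℂ, and let y, z : U → ℂ be differentiable with y, z, and z + θ0 nonvanishing on U, satisfying the first two equations of system (C.40): t·y′ = t·y − 2z(y−1)² − ((θ0 − θ1 + θ∞)/2)·(y−1)² + (θ0+θ1)·(y−1) and t·z′ = y·z·(z + (θ0−θ1+θ∞)/2) − (1/y)·(z+θ0)·(z + (θ0+θ1+θ∞)/2). Let f, g : U → ℂ be differentiable and nonvanishing, satisfying t·f′/f = −t·z′/(z+θ0) − t·z′/(2z) + (1/2)·(y·(z+(θ0−θ1+θ∞)/2) − (z+θ0)) + ((z+θ0)/(2z))·((1/y)·(z+(θ0+θ1+θ∞)/2) − z) and t·g′/g = −t·z′/z − t·z′/(2(z+θ0)) − (z/(2(z+θ0)))·(y·(z+(θ0−θ1+θ∞)/2)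 − (z+θ0)) − (1/2)·((1/y)·(z+(θ0+θ1+θ∞)/2) − z). Define w1 = −f·z·(z+θ0), w2 = 1/(g·z), w̃1 = 1/(f·(z+θ0)), w̃2 = g·z·(z+θ0), w3 = (g/f)·((1/y)·(z + (θ0+θ1+θ∞)/2) − z), w̃3 = −(f/g)·(y·(z + (θ0−θ1+θ∞)/2) − (z+θ0)). Then, for any constants m, m̃ ∈ ℂ with m̃ − m = θ∞, the functions (w1, w2, w3, w̃1, w̃2, w̃3) satisfy system (P5sys): t·w1′ = w̃2·w̃3, t·w̃1′ = −w2·w3, t·w2′ = −w̃1·w̃3, t·w̃2′ = w1·w3, t·w3′ = −(t − (m − m̃))·w3 − t·w̃1·w̃2, t·w̃3′ = (t − (m − m̃))·w̃3 + t·w1·w2, and moreover w1·w̃1 + w2·w̃2 = θ0 identically on U. -/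
/-- The inverse parametrization (P5-wfunctions): from P5 data (y, z) and auxiliary
functions f, g, the functions w_j, w̃_j solve (P5sys) with the first integral θ0. -/
theorem stmt_7
    (U : Set ℂ) (hU : IsOpen U) (hU0 : (0 : ℂ) ∉ U)
    (th0 th1 thI : ℂ)
    (y z : ℂ → ℂ)
    (hyd : ∀ t ∈ U, DifferentiableAt ℂ y t)
    (hzd : ∀ t ∈ U, DifferentiableAt ℂ z t)
    (hyne : ∀ t ∈ U, y t ≠ 0)
    (hzne : ∀ t ∈ U, z t ≠ 0)
    (hzth0 : ∀ t ∈ U, z t + th0 ≠ 0)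
    (heq1 : ∀ t ∈ U, t * deriv y t = t * y t - 2 * z t * (y t - 1) ^ 2
        - ((th0 - th1 + thI) / 2) * (y t - 1) ^ 2 + (th0 + th1) * (y t - 1))
    (heq2 : ∀ t ∈ U, t * deriv z t = y t * z t * (z t + (th0 - th1 + thI) / 2)
        - (1 / y t) * (z t + th0) * (z t + (th0 + th1 + thI) / 2))
    (f g : ℂ → ℂ)
    (hfd : ∀ t ∈ U, DifferentiableAt ℂ f t)
    (hgd : ∀ t ∈ U, DifferentiableAt ℂ g t)
    (hfne : ∀ t ∈ U, f t ≠ 0)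
    (hgne : ∀ t ∈ U, g t ≠ 0)
    (hfeq : ∀ t ∈ U,
      t * deriv f t / f t
        = -(t * deriv z t) / (z t + th0) - (t * deriv z t) / (2 * z t)
          + (1 / 2) * (y t * (z t + (th0 - th1 + thI) / 2) - (z t + th0))
          + ((z t + th0) / (2 * z t))
            * ((1 / y t) * (z t + (th0 + th1 + thI) / 2) - z t))
    (hgeq : ∀ t ∈ U,
      t * deriv g t / g t
        = -(t * deriv z t) / z t - (t * deriv z t) / (2 * (z t + th0))
          - (z t / (2 * (z t + th0)))
            * (y t * (z t + (th0 - th1 + thI) / 2) - (z t + th0))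
          - (1 / 2) * ((1 / y t) * (z t + (th0 + th1 + thI) / 2) - z t))
    (w1 w2 w3 wt1 wt2 wt3 : ℂ → ℂ)
    (hw1 : w1 = fun t => -(f t * z t * (z t + th0)))
    (hw2 : w2 = fun t => 1 / (g t * z t))
    (hwt1 : wt1 = fun t => 1 / (f t * (z t + th0)))
    (hwt2 : wt2 = fun t => g t * z t * (z t + th0))
    (hw3 : w3 = fun t => (g t / f t) * ((1 / y t) * (z t + (th0 + th1 + thI) / 2) - z t))
    (hwt3 : wt3 = fun t =>
      -((f t / g t) * (y t * (z t + (th0 - th1 + thI) / 2) - (z t + th0)))) :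
    ∀ m mt : ℂ, mt - m = thI →
    ∀ t ∈ U,
      DifferentiableAt ℂ w1 t ∧ DifferentiableAt ℂ w2 t ∧ DifferentiableAt ℂ w3 t ∧
      DifferentiableAt ℂ wt1 t ∧ DifferentiableAt ℂ wt2 t ∧ DifferentiableAt ℂ wt3 t ∧
      t * deriv w1 t = wt2 t * wt3 t ∧
      t * deriv wt1 t = -(w2 t * w3 t) ∧
      t * deriv w2 t = -(wt1 t * wt3 t) ∧
      t * deriv wt2 t = w1 t * w3 t ∧
      t * deriv w3 t = -(t - (m - mt)) * w3 t - t * (wt1 t * wt2 t) ∧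
      t * deriv wt3 t = (t - (m - mt)) * wt3 t + t * (w1 t * w2 t) ∧
      w1 t * wt1 t + w2 t * wt2 t = th0 := by
  subst hw1 hw2 hwt1 hwt2 hw3 hwt3
  intro m mt hm t ht
  have hy0 := hyne t ht
  have hz0 := hzne t ht
  have hzt := hzth0 t ht
  have hf0 := hfne t ht
  have hg0 := hgne t ht
  have dy := (hyd t ht).hasDerivAt
  have dz := (hzd t ht).hasDerivAt
  have df := (hfd t ht).hasDerivAt
  have dg := (hgd t ht).hasDerivAt
  have ey := heq1 t ht
  have ez := heq2 t ht
  have ef := hfeq t ht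
  have eg := hgeq t ht
  rw [ez, div_eq_iff hf0] at ef
  rw [ez, div_eq_iff hg0] at eg
  have dzt := dz.add_const th0
  have dA := (dy.fun_mul (dz.add_const ((th0 - th1 + thI) / 2))).fun_sub dzt
  have dB := (((hasDerivAt_const t (1 : ℂ)).fun_div dy hy0).fun_mul
    (dz.add_const ((th0 + th1 + thI) / 2))).fun_sub dz
  have d1 := ((df.fun_mul dz).fun_mul dzt).fun_neg
  have d2 := (hasDerivAt_const t (1 : ℂ)).fun_div (dg.fun_mul dz) (mul_ne_zero hg0 hz0)
  have d3 := (dg.fun_div df hf0).fun_mul dB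
  have dt1 := (hasDerivAt_const t (1 : ℂ)).fun_div (df.fun_mul dzt) (mul_ne_zero hf0 hzt)
  have dt2 := (dg.fun_mul dz).fun_mul dzt
  have dt3 := ((df.fun_div dg hg0).fun_mul dA).fun_neg
  refine ⟨d1.differentiableAt, d2.differentiableAt, d3.differentiableAt, dt1.differentiableAt,
    dt2.differentiableAt, dt3.differentiableAt, ?_⟩
  rw [d1.deriv, d2.deriv, d3.deriv, dt1.deriv, dt2.deriv, dt3.deriv]
  beta_reduce
  obtain rfl : mt = m + thI := by linear_combination hm
  generalize deriv y t = y' at *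
  generalize deriv z t = z' at *
  generalize deriv f t = f' at *
  generalize deriv g t = g' at *
  generalize y t = Y at *
  generalize z t = Z at *
  generalize f t = F at *
  generalize g t = G at *
  refine ⟨?_, ?_, ?_, ?_, ?_, ?_, ?_⟩
  · trans -(t * f' * Z * (Z + th0) + F * (t * z') * (2 * Z + th0))
    · ring
    rw [ef, ez]
    field_simp
    ring
  · trans -(t * f' * (Z + th0) + F * (t * z')) / (F * (Z + th0)) ^ 2
    · ring
    rw [ef, ez]
    field_simp
    ring
  · trans -(t * g' * Z + G * (t * z')) / (G * Z) ^ 2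
    · ring
    rw [eg, ez]
    field_simp
    ring
  · trans t * g' * Z * (Z + th0) + G * (t * z') * (2 * Z + th0)
    · ring
    rw [eg, ez]
    field_simp
    ring
  · trans (t * g' * F - G * (t * f')) / F ^ 2 * (1 / Y * (Z + (th0 + th1 + thI) / 2) - Z)
        + G / F * (-(t * y') / Y ^ 2 * (Z + (th0 + th1 + thI) / 2) + 1 / Y * (t * z') - t * z')
    · ring
    rw [ef, eg, ey, ez]
    field_simp
    ring
  · trans -((t * f' * G - F * (t * g')) / G ^ 2 * (Y * (Z + (th0 - th1 + thI) / 2) - (Z + th0))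
        + F / G * (t * y' * (Z + (th0 - th1 + thI) / 2) + Y * (t * z') - t * z'))
    · ring
    rw [ef, eg, ey, ez]
    field_simp
    ring
  · field_simp
    ring
end
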